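/- arXiv:math/0002163 — 4 statements merged into one kernel-verified Lean document; each statement's English description precedes it below -/
import Mathlib

section
/- Let U ⊆ ℂⁿ be open, y⁰ ∈ U, and consider the homogeneous linear PDE system (R_q) of order q: ∑_{j=1}^m ∑_{|α| ≤ q} a^i_{jα}(y) ∂^α τ^j = 0 for i = 1,…,s, with coefficients a^i_{jα} analytic on U, for an unknown map τ = (τ¹,…,τ^m). Suppose there exists r ≥ 0 such that the symbol of the r-prolongation of (R_q) at y⁰ is trivial, i.e. the only family v = (v^j_γ) of complex numbers, indexed by j = 1,…,m and multi-indices γ with |γ| = q + r, satisfying ∑_{j=1}^m ∑_{|α| = q} a^i_{jα}(y⁰) v^j_{β+α} = 0 for every i = 1,…,s and every multi-index β with |β| = r, is v = 0. Then for every connected open set V with y⁰ ∈ V ⊆ U, the ℂ-vector space of analytic solutions τ : V → ℂ^m of (R_q) is finite dimensional; moreover its dimension is at most m times the number of multi-indices of degree ≤ q + r − 1 in n variables. -/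
/-!
The theorem reduces to a uniqueness statement: a solution `τ` on `V` all of whose partial derivatives
of order `< q + r` vanish at `y0` is zero on `V` (`IsSol.eqOn_zero`). The map sending a solution to
its `(q + r - 1)`-jet at `y0` then controls the restriction of the solution to `V`, which
bounds the dimension by the number `m * card (degLt n (q + r))` of jet coordinates
(`rank_range_le_of_ker_le`).

For uniqueness, all derivatives of `τ` at `y0` are shown to vanish by induction on their order `N`;
the identity theorem then gives `τ = 0` on the connected set `V`. Let `N ≥ q + r`, let the
derivatives of order `< N` vanish, and apply a derivative `∂^β` with `|β| = N - q` to the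
equations at `y0`. In the Leibniz expansion, every term in which a derivative falls on a coefficient
involves `τ` to order `< N` only, so what remains is
`∑_j ∑_{|α| = q} a^i_{jα}(y0) ∂^{β+α} τ^j(y0) = 0`. For a fixed multi-index `δ` with
`|δ| = N - q - r`, the family `v^j_γ = ∂^{γ+δ} τ^j(y0)` therefore lies in the symbol of the
`r`-prolongation, hence vanishes; every derivative of order `N` occurs in such a family.

Iterated derivatives are handled as derivatives along lists of directions (`listD`), for which
induction is convenient; commutation of partial derivatives identifies them with `mpd`.
-/

/-- The partial derivative of `f : ℂⁿ → ℂ` in the `i`-th coordinate direction. -/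
noncomputable def pdi {n : ℕ} (i : Fin n) (f : (Fin n → ℂ) → ℂ) : (Fin n → ℂ) → ℂ :=
  fun y => fderiv ℂ f y (Pi.single i 1)

/-- The iterated partial derivative `∂^α f` of `f : ℂⁿ → ℂ` associated with the
multi-index `α : Fin n → ℕ` (the `i`-th coordinate derivative taken `α i` times). -/
noncomputable def mpd {n : ℕ} (α : Fin n → ℕ) (f : (Fin n → ℂ) → ℂ) : (Fin n → ℂ) → ℂ :=
  (List.finRange n).foldr (fun i g => (pdi i)^[α i] g) f

/-- The finite set of multi-indices in `n` variables of total degree `≤ d`. -/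
def degLe (n d : ℕ) : Finset (Fin n → ℕ) :=
  (Finset.Iic (fun _ => d)).filter (fun α => ∑ i, α i ≤ d)

/-- The finite set of multi-indices in `n` variables of total degree `= d`. -/
def degEq (n d : ℕ) : Finset (Fin n → ℕ) :=
  (Finset.Iic (fun _ => d)).filter (fun α => ∑ i, α i = d)

/-- The finite set of multi-indices in `n` variables of total degree `< d`. -/
def degLt (n d : ℕ) : Finset (Fin n → ℕ) :=
  (Finset.Iic (fun _ => d)).filter (fun α => ∑ i, α i < d)

open Filter Topology

namespace FiniteType

variable {n : ℕ}

/-! ### Derivatives along lists of coordinate directions -/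

/-- Iterated partial derivative along a list of coordinate directions, the head of the list being
applied first. -/
noncomputable def listD : List (Fin n) → ((Fin n → ℂ) → ℂ) → ((Fin n → ℂ) → ℂ)
  | [], f => f
  | i :: l, f => listD l (pdi i f)

/-- The multi-index recording how often each direction occurs in a list. -/
def cnt (l : List (Fin n)) : Fin n → ℕ := fun i => l.count i

/-- The list of directions along which `mpd α` differentiates, in its order of application. -/
def idxList (α : Fin n → ℕ) : List (Fin n) :=
  ((List.finRange n).flatMap fun i => List.replicate (α i) i).reverse

lemma listD_append (l₁ l₂ : List (Fin n)) (f : (Fin n → ℂ) → ℂ) :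
    listD (l₁ ++ l₂) f = listD l₂ (listD l₁ f) := by
  induction l₁ generalizing f with
  | nil => rfl
  | cons i l ih => exact ih _

lemma listD_replicate (k : ℕ) (i : Fin n) (f : (Fin n → ℂ) → ℂ) :
    listD (List.replicate k i) f = (pdi i)^[k] f := by
  induction k generalizing f with
  | zero => rfl
  | succ k ih => rw [List.replicate_succ, Function.iterate_succ_apply, ← ih]; rfl

lemma mpd_eq_listD (α : Fin n → ℕ) (f : (Fin n → ℂ) → ℂ) : mpd α f = listD (idxList α) f := by
  unfold mpd idxList
  induction List.finRange n with
  | nil => rfl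
  | cons i L ih =>
    rw [List.foldr_cons, ih, List.flatMap_cons, List.reverse_append, listD_append,
      List.reverse_replicate, listD_replicate]

lemma sum_cnt (l : List (Fin n)) : ∑ i, cnt l i = l.length := by
  induction l with
  | nil => simp [cnt]
  | cons i l ih =>
    simp only [cnt, List.count_cons, List.length_cons, Finset.sum_add_distrib] at ih ⊢
    rw [ih]
    simp

lemma cnt_append (l₁ l₂ : List (Fin n)) : cnt (l₁ ++ l₂) = cnt l₁ + cnt l₂ := by
  ext i; simp [cnt]

lemma cnt_idxList (α : Fin n → ℕ) : cnt (idxList α) = α := by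
  ext i
  simp only [cnt, idxList, List.count_reverse, List.count_flatMap, Function.comp_def,
    List.count_replicate]
  rw [← List.ofFn_eq_map, List.sum_ofFn]
  simp

lemma length_idxList (α : Fin n → ℕ) : (idxList α).length = ∑ i, α i := by
  rw [← sum_cnt, cnt_idxList]

/-! ### Calculus of the iterated derivatives on analytic functions -/

lemma pdi_analyticAt {f : (Fin n → ℂ) → ℂ} {y : Fin n → ℂ} (i : Fin n) (hf : AnalyticAt ℂ f y) :
    AnalyticAt ℂ (pdi i f) y :=
  (ContinuousLinearMap.apply ℂ ℂ (Pi.single i 1 : Fin n → ℂ)).analyticAt _ |>.comp hf.fderiv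

lemma pdi_congr {f g : (Fin n → ℂ) → ℂ} {y : Fin n → ℂ} (i : Fin n) (h : f =ᶠ[𝓝 y] g) :
    pdi i f =ᶠ[𝓝 y] pdi i g := by
  filter_upwards [h.fderiv (𝕜 := ℂ)] with z hz
  simp [pdi, hz]

lemma listD_analyticAt {f : (Fin n → ℂ) → ℂ} {y : Fin n → ℂ} (l : List (Fin n))
    (hf : AnalyticAt ℂ f y) : AnalyticAt ℂ (listD l f) y := by
  induction l generalizing f with
  | nil => exact hf
  | cons i l ih => exact ih (pdi_analyticAt i hf)

lemma listD_congr {f g : (Fin n → ℂ) → ℂ} {y : Fin n → ℂ} (l : List (Fin n))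
    (h : f =ᶠ[𝓝 y] g) : listD l f =ᶠ[𝓝 y] listD l g := by
  induction l generalizing f g with
  | nil => exact h
  | cons i l ih => exact ih (pdi_congr i h)

lemma pdi_pdi {f : (Fin n → ℂ) → ℂ} {y : Fin n → ℂ} (i j : Fin n) (hf : AnalyticAt ℂ f y) :
    pdi i (pdi j f) y = fderiv ℂ (fderiv ℂ f) y (Pi.single i 1) (Pi.single j 1) := by
  have h := hf.fderiv.differentiableAt
  unfold pdi
  rw [fderiv_clm_apply h (differentiableAt_const _)]
  simp

lemma pdi_comm {f : (Fin n → ℂ) → ℂ} {y : Fin n → ℂ} (i j : Fin n) (hf : AnalyticAt ℂ f y) :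
    pdi i (pdi j f) =ᶠ[𝓝 y] pdi j (pdi i f) := by
  filter_upwards [hf.eventually_analyticAt] with z hz
  rw [pdi_pdi i j hz, pdi_pdi j i hz]
  exact (ContDiffAt.isSymmSndFDerivAt_of_omega hz.contDiffAt) _ _

lemma listD_perm {l₁ l₂ : List (Fin n)} (h : l₁.Perm l₂) {f : (Fin n → ℂ) → ℂ} {y : Fin n → ℂ}
    (hf : AnalyticAt ℂ f y) : listD l₁ f =ᶠ[𝓝 y] listD l₂ f := by
  induction h generalizing f with
  | nil => rfl
  | cons i _ ih => exact ih (pdi_analyticAt i hf)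
  | swap i j l => exact listD_congr l (pdi_comm i j hf)
  | trans _ _ ih₁ ih₂ => exact (ih₁ hf).trans (ih₂ hf)

lemma listD_eq_mpd_cnt (l : List (Fin n)) {f : (Fin n → ℂ) → ℂ} {y : Fin n → ℂ}
    (hf : AnalyticAt ℂ f y) : listD l f y = mpd (cnt l) f y := by
  rw [mpd_eq_listD]
  refine (listD_perm (List.perm_iff_count.2 fun i => ?_) hf).eq_of_nhds
  exact (congrFun (cnt_idxList (cnt l)) i).symm

lemma listD_add (l : List (Fin n)) {f g : (Fin n → ℂ) → ℂ} {y : Fin n → ℂ}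
    (hf : AnalyticAt ℂ f y) (hg : AnalyticAt ℂ g y) :
    listD l (fun z => f z + g z) y = listD l f y + listD l g y := by
  induction l generalizing f g with
  | nil => rfl
  | cons i l ih =>
    have h : pdi i (fun z => f z + g z) =ᶠ[𝓝 y] fun z => pdi i f z + pdi i g z := by
      filter_upwards [hf.eventually_analyticAt, hg.eventually_analyticAt] with z hfz hgz
      simp [pdi, fderiv_fun_add hfz.differentiableAt hgz.differentiableAt]
    exact (listD_congr l h).eq_of_nhds.trans (ih (pdi_analyticAt i hf) (pdi_analyticAt i hg))

lemma listD_const_mul (l : List (Fin n)) (c : ℂ) {f : (Fin n → ℂ) → ℂ} {y : Fin n → ℂ}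
    (hf : AnalyticAt ℂ f y) : listD l (fun z => c * f z) y = c * listD l f y := by
  induction l generalizing f with
  | nil => rfl
  | cons i l ih =>
    have h : pdi i (fun z => c * f z) =ᶠ[𝓝 y] fun z => c * pdi i f z := by
      filter_upwards [hf.eventually_analyticAt] with z hfz
      simp [pdi, fderiv_const_mul hfz.differentiableAt]
    exact (listD_congr l h).eq_of_nhds.trans (ih (pdi_analyticAt i hf))

lemma listD_zero (l : List (Fin n)) (y : Fin n → ℂ) : listD l (fun _ => 0) y = 0 := by
  simpa using listD_const_mul l 0 (analyticAt_const (v := (0 : ℂ)) (x := y))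

lemma listD_sum {ι : Type*} (l : List (Fin n)) (s : Finset ι) (f : ι → (Fin n → ℂ) → ℂ)
    {y : Fin n → ℂ} (hf : ∀ k ∈ s, AnalyticAt ℂ (f k) y) :
    listD l (fun z => ∑ k ∈ s, f k z) y = ∑ k ∈ s, listD l (f k) y := by
  classical
  induction s using Finset.induction_on with
  | empty => simpa using listD_zero l y
  | insert k s hk ih =>
    simp only [Finset.sum_insert hk]
    rw [← ih fun k hk => hf k (Finset.mem_insert_of_mem hk)]
    exact listD_add l (hf k (Finset.mem_insert_self k s))
      (Finset.analyticAt_fun_sum s fun k hk => hf k (Finset.mem_insert_of_mem hk))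

/-- Leading term of the Leibniz rule: if `f` vanishes at `y` to order at least the order of the
derivative, only the term in which no derivative falls on the coefficient `a` survives at `y`. -/
lemma listD_mul (l : List (Fin n)) {a f : (Fin n → ℂ) → ℂ} {y : Fin n → ℂ}
    (ha : AnalyticAt ℂ a y) (hf : AnalyticAt ℂ f y)
    (h0 : ∀ l' : List (Fin n), l'.length < l.length → listD l' f y = 0) :
    listD l (fun z => a z * f z) y = a y * listD l f y := by
  induction l generalizing a f with
  | nil => rfl
  | cons i l ih =>
    have h : pdi i (fun z => a z * f z) =ᶠ[𝓝 y]
        fun z => pdi i a z * f z + a z * pdi i f z := by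
      filter_upwards [ha.eventually_analyticAt, hf.eventually_analyticAt] with z haz hfz
      simp [pdi, fderiv_fun_mul haz.differentiableAt hfz.differentiableAt]
      ring
    have hai := pdi_analyticAt i ha
    have hfi := pdi_analyticAt i hf
    calc listD (i :: l) (fun z => a z * f z) y
        = listD l (fun z => pdi i a z * f z + a z * pdi i f z) y :=
          (listD_congr l h).eq_of_nhds
      _ = pdi i a y * listD l f y + a y * listD l (pdi i f) y := by
          rw [listD_add l (hai.fun_mul hf) (ha.fun_mul hfi),
            ih hai hf fun l' hl' => h0 l' (by simp; omega),
            ih ha hfi fun l' hl' => h0 (i :: l') (by simpa using hl')]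
      _ = a y * listD (i :: l) f y := by
          rw [h0 l (by simp)]; simp [listD]

lemma iteratedFDeriv_single (k : ℕ) (i : Fin k → Fin n) {f : (Fin n → ℂ) → ℂ} {y : Fin n → ℂ}
    (hf : AnalyticAt ℂ f y) :
    iteratedFDeriv ℂ k f y (fun t => Pi.single (i t) 1) = listD (List.ofFn i).reverse f y := by
  induction k generalizing y with
  | zero => simp [listD]
  | succ k ih =>
    have hd : DifferentiableAt ℂ (iteratedFDeriv ℂ k f) y :=
      (hf.contDiffAt (n := ⊤)).differentiableAt_iteratedFDeriv (by simp)
    have he : (fun z => iteratedFDeriv ℂ k f z (fun t => Pi.single (i t.succ) 1)) =ᶠ[𝓝 y]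
        listD (List.ofFn fun t : Fin k => i t.succ).reverse f := by
      filter_upwards [hf.eventually_analyticAt] with z hz
      exact ih (fun t => i t.succ) hz
    rw [List.ofFn_succ, List.reverse_cons, listD_append]
    change _ = fderiv ℂ _ y _
    rw [iteratedFDeriv_succ_apply_left, ← he.fderiv_eq,
      fderiv_continuousMultilinear_apply_const_apply hd]
    rfl

/-- An analytic function whose partial derivatives of all orders vanish at `y` vanishes
near `y`. -/
lemma eventually_zero_of_listD {f : (Fin n → ℂ) → ℂ} {y : Fin n → ℂ} (hf : AnalyticAt ℂ f y)
    (h0 : ∀ l, listD l f y = 0) : f =ᶠ[𝓝 y] 0 := by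
  have hz : ∀ k, iteratedFDeriv ℂ k f y = 0 := by
    intro k
    apply ContinuousMultilinearMap.toMultilinearMap_injective
    refine Module.Basis.ext_multilinear (fun _ => Pi.basisFun ℂ (Fin n)) fun i => ?_
    simpa [h0] using iteratedFDeriv_single k i hf
  obtain ⟨p, ρ, hp⟩ := hf
  have hb : Metric.eball y ρ ∈ 𝓝 y := Metric.eball_mem_nhds y hp.r_pos
  filter_upwards [hb] with z hzb
  have hs := hp.hasSum_iteratedFDeriv (y := z - y) (by simpa [edist_eq_enorm_sub] using hzb)
  simp only [hz, add_sub_cancel] at hs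
  simpa using hs.unique (by simp)

/-! ### Multi-indices of bounded degree -/

lemma mem_Iic_of_sum_le {α : Fin n → ℕ} {d : ℕ} (h : ∑ i, α i ≤ d) :
    α ∈ Finset.Iic (fun _ : Fin n => d) :=
  Finset.mem_Iic.2 fun i =>
    (Finset.single_le_sum (f := α) (fun _ _ => Nat.zero_le _) (Finset.mem_univ i)).trans h

lemma mem_degLe {α : Fin n → ℕ} {d : ℕ} : α ∈ degLe n d ↔ ∑ i, α i ≤ d := by
  unfold degLe
  rw [Finset.mem_filter]
  exact ⟨And.right, fun h => ⟨mem_Iic_of_sum_le h, h⟩⟩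

lemma mem_degEq {α : Fin n → ℕ} {d : ℕ} : α ∈ degEq n d ↔ ∑ i, α i = d := by
  unfold degEq
  rw [Finset.mem_filter]
  exact ⟨And.right, fun h => ⟨mem_Iic_of_sum_le h.le, h⟩⟩

lemma mem_degLt {α : Fin n → ℕ} {d : ℕ} : α ∈ degLt n d ↔ ∑ i, α i < d := by
  unfold degLt
  rw [Finset.mem_filter]
  exact ⟨And.right, fun h => ⟨mem_Iic_of_sum_le h.le, h⟩⟩

/-! ### Solutions with vanishing jet -/

variable {m s q r : ℕ} {a : Fin s → Fin m → (Fin n → ℕ) → (Fin n → ℂ) → ℂ}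
  {V : Set (Fin n → ℂ)} {y0 : Fin n → ℂ} {τ : (Fin n → ℂ) → Fin m → ℂ}

/-- `τ` is an analytic solution on `V` of the system of order `q` with coefficients `a`; its values
outside `V` are arbitrary. -/
def IsSol (q : ℕ) (a : Fin s → Fin m → (Fin n → ℕ) → (Fin n → ℂ) → ℂ) (V : Set (Fin n → ℂ))
    (τ : (Fin n → ℂ) → Fin m → ℂ) : Prop :=
  (∀ j, AnalyticOnNhd ℂ (fun y => τ y j) V) ∧
    ∀ (i : Fin s), ∀ y ∈ V, ∑ j, ∑ α ∈ degLe n q, a i j α y * mpd α (fun z => τ z j) y = 0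

/-- If the derivatives of a solution of order `< q + |l|` vanish at `y0`, then differentiating the
equations along `l` leaves a purely algebraic condition on the derivatives of order `q + |l|`,
involving the principal part of the system only. -/
lemma IsSol.principal (hτ : IsSol q a V τ) (hV : IsOpen V) (hy0 : y0 ∈ V)
    (ha : ∀ i j α, (∑ l, α l) ≤ q → AnalyticAt ℂ (a i j α) y0) (l : List (Fin n))
    (h0 : ∀ l' : List (Fin n), l'.length < q + l.length →
      ∀ j, listD l' (fun z => τ z j) y0 = 0) (i : Fin s) :
    ∑ j, ∑ α ∈ degEq n q, a i j α y0 * mpd (cnt l + α) (fun z => τ z j) y0 = 0 := by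
  have hA : ∀ j, AnalyticAt ℂ (fun z => τ z j) y0 := fun j => hτ.1 j y0 hy0
  have hM : ∀ j α, AnalyticAt ℂ (mpd α fun z => τ z j) y0 := fun j α => by
    rw [mpd_eq_listD]; exact listD_analyticAt _ (hA j)
  have hprod : ∀ j, ∀ α ∈ degLe n q,
      AnalyticAt ℂ (fun z => a i j α z * mpd α (fun z => τ z j) z) y0 :=
    fun j α hα => (ha i j α (mem_degLe.1 hα)).fun_mul (hM j α)
  have hE : (fun y => ∑ j, ∑ α ∈ degLe n q, a i j α y * mpd α (fun z => τ z j) y)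
      =ᶠ[𝓝 y0] fun _ => 0 := by
    filter_upwards [hV.mem_nhds hy0] with y hy using hτ.2 i y hy
  have h1 := (listD_congr l hE).eq_of_nhds
  rw [listD_zero, listD_sum l _ _ fun j _ => Finset.analyticAt_fun_sum _ (hprod j)] at h1
  rw [← h1]
  refine Finset.sum_congr rfl fun j _ => ?_
  rw [listD_sum l _ _ (hprod j)]
  have hsub : degEq n q ⊆ degLe n q := fun α hα => mem_degLe.2 (mem_degEq.1 hα).le
  have hterm : ∀ α ∈ degLe n q, listD l (fun z => a i j α z * mpd α (fun z => τ z j) z) y0 =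
      a i j α y0 * listD (idxList α ++ l) (fun z => τ z j) y0 := by
    intro α hα
    have hα' := mem_degLe.1 hα
    rw [listD_mul l (ha i j α hα') (hM j α), listD_append, ← mpd_eq_listD]
    intro l' hl'
    rw [mpd_eq_listD, ← listD_append]
    refine h0 _ ?_ j
    rw [List.length_append, length_idxList]
    omega
  rw [Finset.sum_congr rfl hterm]
  rw [← Finset.sum_subset hsub]
  · refine Finset.sum_congr rfl fun α _ => ?_
    rw [listD_eq_mpd_cnt _ (hA j), cnt_append, cnt_idxList, add_comm]
  · intro α hα hα'
    have h2 := mem_degLe.1 hα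
    rw [mem_degEq] at hα'
    rw [h0 _ _ j, mul_zero]
    rw [List.length_append, length_idxList]
    omega

/-- Triviality of the symbol propagates vanishing from the derivatives of order `< q + r` to all
derivatives. -/
lemma IsSol.listD_eq_zero (hτ : IsSol q a V τ) (hV : IsOpen V) (hy0 : y0 ∈ V)
    (ha : ∀ i j α, (∑ l, α l) ≤ q → AnalyticAt ℂ (a i j α) y0)
    (hsymb : ∀ v : (Fin n → ℕ) → Fin m → ℂ,
      (∀ (i : Fin s) (β : Fin n → ℕ), (∑ l, β l) = r →
        ∑ j, ∑ α ∈ degEq n q, a i j α y0 * v (β + α) j = 0) →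
      ∀ γ : Fin n → ℕ, (∑ l, γ l) = q + r → ∀ j, v γ j = 0)
    (h0 : ∀ α ∈ degLt n (q + r), ∀ j, mpd α (fun z => τ z j) y0 = 0)
    (l : List (Fin n)) (j : Fin m) : listD l (fun z => τ z j) y0 = 0 := by
  have hA : ∀ j, AnalyticAt ℂ (fun z => τ z j) y0 := fun j => hτ.1 j y0 hy0
  induction hN : l.length using Nat.strong_induction_on generalizing l j with
  | _ N ih =>
    subst hN
    rcases lt_or_ge l.length (q + r) with hlt | hge
    · rw [listD_eq_mpd_cnt l (hA j)]
      exact h0 _ (mem_degLt.2 (by rwa [sum_cnt])) j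
    -- Split `l` into a part of length `q + r`, which plays the role of `γ`, and a remainder `δ`.
    have hvan := hsymb (fun γ j => mpd (γ + cnt (l.drop (q + r))) (fun z => τ z j) y0) ?_
      (cnt (l.take (q + r))) (by rw [sum_cnt, List.length_take]; omega) j
    · rw [listD_eq_mpd_cnt l (hA j)]
      simpa only [← cnt_append, List.take_append_drop] using hvan
    · intro i β hβ
      have hlen : (idxList β ++ l.drop (q + r)).length = l.length - q := by
        rw [List.length_append, length_idxList, hβ, List.length_drop]; omega
      have hp := hτ.principal hV hy0 ha (idxList β ++ l.drop (q + r))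
        (fun l' hl' j => ih l'.length (by omega) l' j rfl) i
      simpa only [cnt_append, cnt_idxList, add_right_comm] using hp

lemma IsSol.eqOn_zero (hτ : IsSol q a V τ) (hV : IsOpen V) (hVc : IsConnected V) (hy0 : y0 ∈ V)
    (ha : ∀ i j α, (∑ l, α l) ≤ q → AnalyticAt ℂ (a i j α) y0)
    (hsymb : ∀ v : (Fin n → ℕ) → Fin m → ℂ,
      (∀ (i : Fin s) (β : Fin n → ℕ), (∑ l, β l) = r →
        ∑ j, ∑ α ∈ degEq n q, a i j α y0 * v (β + α) j = 0) →
      ∀ γ : Fin n → ℕ, (∑ l, γ l) = q + r → ∀ j, v γ j = 0)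
    (h0 : ∀ α ∈ degLt n (q + r), ∀ j, mpd α (fun z => τ z j) y0 = 0) :
    ∀ y ∈ V, τ y = 0 := by
  intro y hy
  ext j
  exact (hτ.1 j).eqOn_zero_of_preconnected_of_eventuallyEq_zero hVc.isPreconnected hy0
    (eventually_zero_of_listD (hτ.1 j y0 hy0)
      fun l => hτ.listD_eq_zero hV hy0 ha hsymb h0 l j) hy

/-! ### The space of solutions and its dimension -/

lemma mpd_add (α : Fin n → ℕ) {f g : (Fin n → ℂ) → ℂ} {y : Fin n → ℂ}
    (hf : AnalyticAt ℂ f y) (hg : AnalyticAt ℂ g y) :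
    mpd α (fun z => f z + g z) y = mpd α f y + mpd α g y := by
  simpa only [mpd_eq_listD] using listD_add (idxList α) hf hg

lemma mpd_const_mul (α : Fin n → ℕ) (c : ℂ) {f : (Fin n → ℂ) → ℂ} {y : Fin n → ℂ}
    (hf : AnalyticAt ℂ f y) : mpd α (fun z => c * f z) y = c * mpd α f y := by
  simpa only [mpd_eq_listD] using listD_const_mul (idxList α) c hf

/-- The solutions on `V` as a subspace of all functions on `ℂⁿ` (with arbitrary values off `V`). -/
def solSpace (q : ℕ) (a : Fin s → Fin m → (Fin n → ℕ) → (Fin n → ℂ) → ℂ)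
    (V : Set (Fin n → ℂ)) : Submodule ℂ ((Fin n → ℂ) → Fin m → ℂ) where
  carrier := {τ | IsSol q a V τ}
  zero_mem' := by
    refine ⟨fun j => analyticOnNhd_const, fun i y _ => ?_⟩
    refine Finset.sum_eq_zero fun j _ => Finset.sum_eq_zero fun α _ => ?_
    have : mpd α (fun _ : Fin n → ℂ => (0 : ℂ)) y = 0 := by
      rw [mpd_eq_listD]; exact listD_zero _ y
    simp [this]
  add_mem' := by
    intro τ σ hτ hσ
    refine ⟨fun j => (hτ.1 j).add (hσ.1 j), fun i y hy => ?_⟩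
    simp only [Pi.add_apply]
    simp only [fun α j => mpd_add α (hτ.1 j y hy) (hσ.1 j y hy), mul_add,
      Finset.sum_add_distrib, hτ.2 i y hy, hσ.2 i y hy, add_zero]
  smul_mem' := by
    intro c τ hτ
    refine ⟨fun j => analyticOnNhd_const.mul (hτ.1 j), fun i y hy => ?_⟩
    simp only [Pi.smul_apply, smul_eq_mul]
    simp only [fun α j => mpd_const_mul α c (hτ.1 j y hy), mul_left_comm _ c,
      ← Finset.mul_sum, hτ.2 i y hy, mul_zero]

/-- The jet map, sending a solution to its derivatives of order `< d` at a point of `V`. -/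
noncomputable def jetMap (q : ℕ) (a : Fin s → Fin m → (Fin n → ℕ) → (Fin n → ℂ) → ℂ)
    {V : Set (Fin n → ℂ)} {y0 : Fin n → ℂ} (hy0 : y0 ∈ V) (d : ℕ) :
    solSpace q a V →ₗ[ℂ] (Fin m × degLt n d → ℂ) where
  toFun τ p := mpd p.2.1 (fun z => τ.1 z p.1) y0
  map_add' τ σ := by
    ext p
    exact mpd_add _ (τ.2.1 p.1 y0 hy0) (σ.2.1 p.1 y0 hy0)
  map_smul' c τ := by
    ext p
    exact mpd_const_mul _ c (τ.2.1 p.1 y0 hy0)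

/-- A linear map `R` factors through any `Φ` with `ker Φ ≤ ker R`, so its rank is at most the
dimension of the target of `Φ`. -/
lemma rank_range_le_of_ker_le {K S W X : Type} [Field K] [AddCommGroup S] [Module K S]
    [AddCommGroup W] [Module K W] [AddCommGroup X] [Module K X] (R : S →ₗ[K] X) (Φ : S →ₗ[K] W)
    (h : LinearMap.ker Φ ≤ LinearMap.ker R) :
    Module.rank K (LinearMap.range R) ≤ Module.rank K W := by
  obtain ⟨g, hg⟩ := Φ.rangeRestrict.exists_rightInverse_of_surjective Φ.range_rangeRestrict
  have hle : LinearMap.range R ≤ LinearMap.range (R ∘ₗ g) := by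
    rintro _ ⟨x, rfl⟩
    refine ⟨Φ.rangeRestrict x, ?_⟩
    have h1 : Φ (g (Φ.rangeRestrict x)) = Φ x :=
      congrArg Subtype.val (LinearMap.congr_fun hg (Φ.rangeRestrict x))
    have h2 : g (Φ.rangeRestrict x) - x ∈ LinearMap.ker R :=
      h (by rw [LinearMap.mem_ker, map_sub, h1, sub_self])
    rwa [LinearMap.mem_ker, map_sub, sub_eq_zero] at h2
  exact (Submodule.rank_mono hle).trans
    ((rank_range_le _).trans (Submodule.rank_le _))

end FiniteType

open FiniteType

/-- Let `U ⊆ ℂⁿ` be open, `y⁰ ∈ U`, and consider the homogeneous linear PDE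
system `(R_q)` of order `q`: `∑_{j=1}^m ∑_{|α| ≤ q} a^i_{jα}(y) ∂^α τ^j = 0` (`i = 1,…,s`),
with coefficients analytic on `U`.  Suppose there is `r ≥ 0` such that the symbol of the
`r`-prolongation of `(R_q)` at `y⁰` is trivial: the only family `v = (v^j_γ)` (indexed by
`j = 1,…,m` and multi-indices `γ` with `|γ| = q + r`) satisfying
`∑_{j=1}^m ∑_{|α| = q} a^i_{jα}(y⁰) v^j_{β+α} = 0` for every `i` and every `β` with
`|β| = r`, is `v = 0`.  Then for every connected open `V` with `y⁰ ∈ V ⊆ U`, the space of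
analytic solutions `τ : V → ℂ^m` of `(R_q)` is finite dimensional, of dimension at most
`m` times the number of multi-indices of degree `≤ q + r − 1` (i.e. `< q + r`) in `n`
variables. -/
theorem finite_type_finite_dimensional_solutions
    (n m s q r : ℕ)
    (U : Set (Fin n → ℂ)) (hU : IsOpen U) (y0 : Fin n → ℂ) (hy0 : y0 ∈ U)
    (a : Fin s → Fin m → (Fin n → ℕ) → (Fin n → ℂ) → ℂ)
    (ha : ∀ i j α, (∑ l, α l) ≤ q → AnalyticOnNhd ℂ (a i j α) U)
    (hsymb : ∀ v : (Fin n → ℕ) → Fin m → ℂ,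
      (∀ (i : Fin s) (β : Fin n → ℕ), (∑ l, β l) = r →
        ∑ j, ∑ α ∈ degEq n q, a i j α y0 * v (β + α) j = 0) →
      ∀ γ : Fin n → ℕ, (∑ l, γ l) = q + r → ∀ j, v γ j = 0) :
    ∀ V : Set (Fin n → ℂ), IsOpen V → IsConnected V → y0 ∈ V → V ⊆ U →
      Module.rank ℂ
        ↥(Submodule.span ℂ
          (V.restrict ''
            {τ : (Fin n → ℂ) → Fin m → ℂ |
              (∀ j, AnalyticOnNhd ℂ (fun y => τ y j) V) ∧
              ∀ (i : Fin s), ∀ y ∈ V,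
                ∑ j, ∑ α ∈ degLe n q, a i j α y * mpd α (fun z => τ z j) y = 0}))
        ≤ ((m * (degLt n (q + r)).card : ℕ) : Cardinal) := by
  intro V hV hVc hyV hVU
  let R : solSpace q a V →ₗ[ℂ] (V → Fin m → ℂ) :=
    { toFun := fun τ => V.restrict τ.1
      map_add' := fun _ _ => rfl
      map_smul' := fun _ _ => rfl }
  have hspan : Submodule.span ℂ (V.restrict '' {τ : (Fin n → ℂ) → Fin m → ℂ | IsSol q a V τ})
      ≤ LinearMap.range R := by
    rw [Submodule.span_le]
    rintro _ ⟨τ, hτ, rfl⟩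
    exact ⟨⟨τ, hτ⟩, rfl⟩
  have hker : LinearMap.ker (jetMap q a hyV (q + r)) ≤ LinearMap.ker R := by
    intro τ hτ
    rw [LinearMap.mem_ker] at hτ ⊢
    have hz := τ.2.eqOn_zero hV hVc hyV (fun i j α hα => ha i j α hα y0 hy0) hsymb
      fun α hα j => congrFun hτ (j, ⟨α, hα⟩)
    funext y
    exact hz y y.2
  calc _ ≤ Module.rank ℂ (LinearMap.range R) := Submodule.rank_mono hspan
    _ ≤ Module.rank ℂ (Fin m × degLt n (q + r) → ℂ) := rank_range_le_of_ker_le R _ hker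
    _ = _ := by rw [rank_fun']; simp
end

section
/- In the constant-coefficient setup: if V_s = {0} for some s ∈ ℕ, then V_{s'} = {0} for every s' ≥ s. -/
/-- Constant-coefficient setup: `K` equations, equation `k` of exact order `q k` with
constant coefficients `a k i α` (`|α| = q k`).  A formal solution is a family
`D : multi-indices → ℂ^m` (the would-be partial derivatives at the origin of a solution)
such that for every `k` and every multi-index `β`,
`∑_{i=1}^m ∑_{|α| = q_k} a^k_{iα} D(β+α)_i = 0`. -/
def IsFormalSol {n m K : ℕ} (q : Fin K → ℕ) (a : Fin K → Fin m → (Fin n → ℕ) → ℂ)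
    (D : (Fin n → ℕ) → Fin m → ℂ) : Prop :=
  ∀ (k : Fin K) (β : Fin n → ℕ),
    ∑ i, ∑ α ∈ degEq n (q k), a k i α * D (β + α) i = 0

/-- `v` is an element of the space `V_s`: a family assigning to each multi-index `γ` with
`|γ| = s` a vector `v(γ) ∈ ℂ^m` (realized as a function on all multi-indices vanishing
off the degree-`s` ones) such that for every `k` and every multi-index `β` with
`|β| = s − q_k` (i.e. `|β| + q_k = s`), `∑_{i=1}^m ∑_{|α| = q_k} a^k_{iα} v(β+α)_i = 0`. -/
def MemVs {n m K : ℕ} (q : Fin K → ℕ) (a : Fin K → Fin m → (Fin n → ℕ) → ℂ)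
    (s : ℕ) (v : (Fin n → ℕ) → Fin m → ℂ) : Prop :=
  (∀ γ : Fin n → ℕ, (∑ i, γ i) ≠ s → v γ = 0) ∧
  ∀ (k : Fin K) (β : Fin n → ℕ), (∑ i, β i) + q k = s →
    ∑ i, ∑ α ∈ degEq n (q k), a k i α * v (β + α) i = 0

/-- Differentiation in the `j`-th variable maps `V_{s+1}` to `V_s`. -/
lemma MemVs.shift {n m K : ℕ} {q : Fin K → ℕ} {a : Fin K → Fin m → (Fin n → ℕ) → ℂ}
    {s : ℕ} {v : (Fin n → ℕ) → Fin m → ℂ} (hv : MemVs q a (s + 1) v) (j : Fin n) :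
    MemVs q a s (fun γ => v (γ + Pi.single j 1)) := by
  have hdeg : ∀ γ : Fin n → ℕ,
      ∑ i, (γ + Pi.single j 1 : Fin n → ℕ) i = (∑ i, γ i) + 1 := by
    intro γ
    simp [Finset.sum_add_distrib]
  refine ⟨fun γ hγ => hv.1 _ ?_, fun k β hβ => ?_⟩
  · rw [hdeg]
    omega
  · have h := hv.2 k (β + Pi.single j 1) (by rw [hdeg]; omega)
    simpa only [add_right_comm β] using h

/-- In the constant-coefficient setup, if `V_s = {0}` for some `s ∈ ℕ`,
then `V_{s'} = {0}` for every `s' ≥ s`. -/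
theorem Vs_trivial_mono
    (n m K : ℕ) (hn : 0 < n) (hm : 0 < m)
    (q : Fin K → ℕ) (a : Fin K → Fin m → (Fin n → ℕ) → ℂ)
    (s : ℕ) (hVs : ∀ v : (Fin n → ℕ) → Fin m → ℂ, MemVs q a s v → v = 0) :
    ∀ s' : ℕ, s ≤ s' →
      ∀ v : (Fin n → ℕ) → Fin m → ℂ, MemVs q a s' v → v = 0 := by
  intro s' hs
  induction s', hs using Nat.le_induction with
  | base => exact hVs
  | succ t _ ih =>
    intro v hv
    funext γ
    by_cases hγ : ∑ i, γ i = t + 1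
    · obtain ⟨j, -, hj⟩ : ∃ j ∈ Finset.univ, γ j ≠ 0 :=
        Finset.exists_ne_zero_of_sum_ne_zero (by omega)
      have hle : Pi.single j 1 ≤ γ := by
        intro i
        by_cases hij : i = j
        · subst hij
          simpa using Nat.one_le_iff_ne_zero.mpr hj
        · simp [hij]
      have h := congrFun (ih _ (hv.shift j)) (γ - Pi.single j 1)
      simpa only [tsub_add_cancel_of_le hle, Pi.zero_apply] using h
    · exact hv.1 γ hγ
end

section
/- In the constant-coefficient setup: the ℂ-vector space of formal solutions of the system is finite dimensional if and only if there exists s ∈ ℕ with V_s = {0}. -/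
lemma mem_degEq_sum {n d : ℕ} {α : Fin n → ℕ} (h : α ∈ degEq n d) : ∑ i, α i = d :=
  (Finset.mem_filter.mp h).2

/-- An element of `V_s`, extended by zero, is a formal solution: an equation at `β` with
`|β| + q k ≠ s` involves only values in orders other than `s`. -/
lemma MemVs.isFormalSol {n m K : ℕ} {q : Fin K → ℕ} {a : Fin K → Fin m → (Fin n → ℕ) → ℂ}
    {s : ℕ} {v : (Fin n → ℕ) → Fin m → ℂ} (hv : MemVs q a s v) : IsFormalSol q a v := by
  intro k β
  by_cases h : (∑ i, β i) + q k = s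
  · exact hv.2 k β h
  · refine Finset.sum_eq_zero fun i _ => Finset.sum_eq_zero fun α hα => ?_
    have : v (β + α) = 0 := by
      apply hv.1
      simpa [Finset.sum_add_distrib, mem_degEq_sum hα] using h
    simp [this]

lemma exists_add_eq_sum_eq {n : ℕ} (γ : Fin n → ℕ) (s : ℕ) (h : s ≤ ∑ i, γ i) :
    ∃ ε δ : Fin n → ℕ, ε + δ = γ ∧ ∑ i, δ i = s := by
  induction s with
  | zero => exact ⟨γ, 0, by simp, by simp⟩
  | succ s ih =>
    obtain ⟨ε, δ, rfl, hδ⟩ := ih (by omega)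
    have hε : ∑ i, ε i ≠ 0 := by
      simp only [Pi.add_apply, Finset.sum_add_distrib] at h
      omega
    obtain ⟨j, -, hj⟩ := Finset.exists_ne_zero_of_sum_ne_zero hε
    refine ⟨ε - Pi.single j 1, δ + Pi.single j 1, ?_, ?_⟩
    · ext i
      by_cases hij : i = j
      · subst hij
        simp only [Pi.add_apply, Pi.sub_apply, Pi.single_eq_same]
        omega
      · simp [hij]
    · simp [Finset.sum_add_distrib, hδ]

/-- If `V_s = 0`, then formal solutions vanish in all orders `≥ s`: for `γ = ε + δ` with `|δ| = s`,
the order-`s` part of the shift by `ε` lies in `V_s`, and its value at `δ` is `D γ`. -/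
lemma IsFormalSol.apply_eq_zero {n m K : ℕ} {q : Fin K → ℕ}
    {a : Fin K → Fin m → (Fin n → ℕ) → ℂ} {s : ℕ}
    (hs : ∀ v : (Fin n → ℕ) → Fin m → ℂ, MemVs q a s v → v = 0)
    {D : (Fin n → ℕ) → Fin m → ℂ} (hD : IsFormalSol q a D)
    (γ : Fin n → ℕ) (hγ : s ≤ ∑ i, γ i) : D γ = 0 := by
  obtain ⟨ε, δ, rfl, hδ⟩ := exists_add_eq_sum_eq γ s hγ
  have key := hs (fun η => if ∑ i, η i = s then D (ε + η) else 0) ⟨fun η hη => by simp [hη], ?_⟩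
  · simpa [hδ] using congrFun key δ
  · intro k β hβ
    rw [← hD k (ε + β)]
    refine Finset.sum_congr rfl fun i _ => Finset.sum_congr rfl fun α hα => ?_
    have h : ∑ i, (β + α) i = s := by
      simpa [Finset.sum_add_distrib, mem_degEq_sum hα] using hβ
    simp only [h, if_true, add_assoc]

/-- In the constant-coefficient setup, the `ℂ`-vector space of formal
solutions of the system is finite dimensional if and only if there exists `s ∈ ℕ`
with `V_s = {0}`. -/
theorem formal_solutions_finiteDimensional_iff
    (n m K : ℕ) (hn : 0 < n) (hm : 0 < m)
    (q : Fin K → ℕ) (a : Fin K → Fin m → (Fin n → ℕ) → ℂ) :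
    Module.rank ℂ
        ↥(Submodule.span ℂ {D : (Fin n → ℕ) → Fin m → ℂ | IsFormalSol q a D})
      < Cardinal.aleph0
    ↔ ∃ s : ℕ, ∀ v : (Fin n → ℕ) → Fin m → ℂ, MemVs q a s v → v = 0 := by
  rw [Module.rank_lt_aleph0_iff]
  constructor
  · intro hfin
    by_contra! hne
    choose v hv hv0 using hne
    have hli : LinearIndependent ℂ v := by
      rw [linearIndependent_iff']
      intro S g hg s hs
      obtain ⟨γ, hγ⟩ := Function.ne_iff.mp (hv0 s)
      have hdeg : ∑ i, γ i = s := by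
        by_contra h
        exact hγ ((hv s).1 γ h)
      -- Evaluating the relation at `γ`, of order `s`, isolates the `s`-th term.
      have h := congrFun hg γ
      rw [Finset.sum_apply, Finset.sum_eq_single_of_mem s hs] at h
      · exact (smul_eq_zero.mp h).resolve_right hγ
      · intro t _ hts
        rw [Pi.smul_apply, (hv t).1 γ (by omega), smul_zero]
    have hli' : LinearIndependent ℂ fun s =>
        (⟨v s, Submodule.subset_span (hv s).isFormalSol⟩ :
          ↥(Submodule.span ℂ {D : (Fin n → ℕ) → Fin m → ℂ | IsFormalSol q a D})) :=
      LinearIndependent.of_comp (Submodule.subtype _) hli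
    exact not_finite_iff_infinite.mpr (inferInstance : Infinite ℕ)
      hli'.finite_of_isNoetherian
  · rintro ⟨s, hs⟩
    have hvanish : ∀ D ∈ Submodule.span ℂ {D : (Fin n → ℕ) → Fin m → ℂ | IsFormalSol q a D},
        ∀ γ : Fin n → ℕ, s ≤ ∑ i, γ i → D γ = 0 := by
      intro D hD γ hγ
      induction hD using Submodule.span_induction with
      | mem D hD => exact IsFormalSol.apply_eq_zero hs hD γ hγ
      | zero => rfl
      | add x y _ _ hx hy => simp [hx, hy]
      | smul c x _ hx => simp [hx]
    -- The box `γ ≤ (s, …, s)` is finite and contains every `γ` with `|γ| < s`.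
    let restr := (LinearMap.funLeft ℂ (Fin m → ℂ)
      (Subtype.val : ↥(Finset.Iic (fun _ : Fin n => s)) → (Fin n → ℕ))).comp
      (Submodule.span ℂ {D : (Fin n → ℕ) → Fin m → ℂ | IsFormalSol q a D}).subtype
    refine Module.Finite.of_injective restr ?_
    rw [← LinearMap.ker_eq_bot, LinearMap.ker_eq_bot']
    rintro ⟨D, hD⟩ h
    ext1
    funext γ
    by_cases hγ : s ≤ ∑ i, γ i
    · exact hvanish D hD γ hγ
    · have hmem : γ ∈ Finset.Iic (fun _ : Fin n => s) := by
        rw [Finset.mem_Iic]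
        intro i
        have := Finset.single_le_sum (f := γ) (fun j _ => Nat.zero_le _) (Finset.mem_univ i)
        show γ i ≤ s
        omega
      exact congrFun h ⟨γ, hmem⟩
end

section
/- Let U ⊆ ℂ² be a connected open set with coordinates (x,u), and for t = 1,2,3,4 let linear expressions L_t(θ,η) = c_t¹ θ + c_t² η + c_t³ θ_x + c_t⁴ θ_u + c_t⁵ η_x + c_t⁶ η_u be given, where all coefficients c_t^ν are analytic functions on U. Then the ℂ-vector space of pairs (θ, η) of analytic functions on U satisfying the system η_{xx} = L₁(θ,η), 2η_{xu} − θ_{xx} = L₂(θ,η), η_{uu} − 2θ_{xu} = L₃(θ,η), θ_{uu} = L₄(θ,η) on U has dimension at most 8. In particular, the Lie equations (for the coefficients of an infinitesimal symmetry X = θ ∂/∂x + η ∂/∂u) of any holomorphic second order ordinary differential equation u_{xx} = F(x,u,u_x) are of this form, so the algebra of infinitesimal symmetries of such an equation has dimension at most 8. -/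
/-!
The system is of finite type: its solutions are governed by eight quantities. Put
`Y = (θ, η, θ_x, θ_u, η_x, η_u, η_{xu}, θ_{xu})`. The four equations express the remaining second
derivatives `θ_{xx}, θ_{uu}, η_{xx}, η_{uu}` linearly through `Y`. Differentiating them once gives
the third derivatives: `η_{xxu}` and `θ_{xuu}` come directly from the first and the fourth equation,
while `η_{xuu}` and `θ_{xxu}` solve the nondegenerate linear system
`2 η_{xuu} - θ_{xxu} = ∂_u L₂`, `η_{xuu} - 2 θ_{xxu} = ∂_x L₃`. Hence both partial derivatives of
`Y` are linear in `Y` with analytic coefficients.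

Only the consequence `∂_x Y, ∂_u Y = O(Y)` near a point is needed, so the elimination is carried
out in terms of `=O[𝓝 z₀]` (`isBigO_pd_jetClosed`). If `Y` vanishes at `z₀`, Grönwall's inequality
along segments shows that `Y` vanishes near `z₀` (`eventually_zero_of_isBigO_pd`), and the identity
theorem gives `θ = η = 0` on the connected set `U`. So evaluation of `Y` at a point is injective on
solutions restricted to `U`, and takes values in `ℂ⁸`.
-/

/-- Partial derivative in the first coordinate `x` of a function on `ℂ² = ℂ × ℂ`. -/
noncomputable def pdx (g : ℂ × ℂ → ℂ) : ℂ × ℂ → ℂ := fun p => fderiv ℂ g p (1, 0)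

/-- Partial derivative in the second coordinate `u` of a function on `ℂ² = ℂ × ℂ`. -/
noncomputable def pdu (g : ℂ × ℂ → ℂ) : ℂ × ℂ → ℂ := fun p => fderiv ℂ g p (0, 1)

/-- The general first-order linear expression
`L(θ,η) = c⁰ θ + c¹ η + c² θ_x + c³ θ_u + c⁴ η_x + c⁵ η_u` with given coefficient
functions `c : Fin 6 → (ℂ × ℂ → ℂ)`. -/
noncomputable def linExpr (c : Fin 6 → (ℂ × ℂ → ℂ)) (θ η : ℂ × ℂ → ℂ) (z : ℂ × ℂ) : ℂ :=
  c 0 z * θ z + c 1 z * η z + c 2 z * pdx θ z + c 3 z * pdu θ z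
    + c 4 z * pdx η z + c 5 z * pdu η z

open Filter Topology Asymptotics

/-! ### Directional derivatives of analytic functions -/

/-- The derivative of `g` in the constant direction `v`; `pdx` and `pdu` are, definitionally, the
cases `v = (1, 0)` and `v = (0, 1)`. -/
noncomputable def pd (v : ℂ × ℂ) (g : ℂ × ℂ → ℂ) : ℂ × ℂ → ℂ := fun p => fderiv ℂ g p v

theorem pd_analyticAt {f : ℂ × ℂ → ℂ} {z : ℂ × ℂ} (hf : AnalyticAt ℂ f z) (v : ℂ × ℂ) :
    AnalyticAt ℂ (pd v f) z :=
  ((ContinuousLinearMap.apply ℂ ℂ v).analyticAt _).comp hf.fderiv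

theorem pd_congr {f g : ℂ × ℂ → ℂ} {z : ℂ × ℂ} (h : f =ᶠ[𝓝 z] g) (v : ℂ × ℂ) :
    pd v f =ᶠ[𝓝 z] pd v g :=
  (h.fderiv (𝕜 := ℂ)).mono fun y hy => by simp only [pd, hy]

theorem pd_add {f g : ℂ × ℂ → ℂ} {z : ℂ × ℂ} (hf : AnalyticAt ℂ f z) (hg : AnalyticAt ℂ g z)
    (v : ℂ × ℂ) : pd v (f + g) =ᶠ[𝓝 z] pd v f + pd v g := by
  filter_upwards [hf.eventually_analyticAt, hg.eventually_analyticAt] with y hy hy'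
  simp [pd, fderiv_add hy.differentiableAt hy'.differentiableAt]

theorem pd_sub {f g : ℂ × ℂ → ℂ} {z : ℂ × ℂ} (hf : AnalyticAt ℂ f z) (hg : AnalyticAt ℂ g z)
    (v : ℂ × ℂ) : pd v (f - g) =ᶠ[𝓝 z] pd v f - pd v g := by
  filter_upwards [hf.eventually_analyticAt, hg.eventually_analyticAt] with y hy hy'
  simp [pd, fderiv_sub hy.differentiableAt hy'.differentiableAt]

theorem pd_smul (a : ℂ) (f : ℂ × ℂ → ℂ) (v : ℂ × ℂ) : pd v (a • f) = a • pd v f := by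
  ext y
  simp [pd, fderiv_const_smul_field]

theorem pd_mul {f g : ℂ × ℂ → ℂ} {z : ℂ × ℂ} (hf : AnalyticAt ℂ f z) (hg : AnalyticAt ℂ g z)
    (v : ℂ × ℂ) : pd v (f * g) =ᶠ[𝓝 z] f * pd v g + pd v f * g := by
  filter_upwards [hf.eventually_analyticAt, hg.eventually_analyticAt] with y hy hy'
  simp [pd, fderiv_mul hy.differentiableAt hy'.differentiableAt]
  ring

theorem pd_pd_apply {f : ℂ × ℂ → ℂ} {z : ℂ × ℂ} (hf : AnalyticAt ℂ f z) (v w : ℂ × ℂ) :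
    pd v (pd w f) z = fderiv ℂ (fderiv ℂ f) z v w := by
  have h : HasFDerivAt (fun y => fderiv ℂ f y w)
      ((ContinuousLinearMap.apply ℂ ℂ w).comp (fderiv ℂ (fderiv ℂ f) z)) z :=
    (ContinuousLinearMap.apply ℂ ℂ w).hasFDerivAt.comp z
      hf.fderiv.differentiableAt.hasFDerivAt
  change fderiv ℂ (fun y => fderiv ℂ f y w) z v = _
  rw [h.fderiv]
  rfl

theorem pd_comm {f : ℂ × ℂ → ℂ} {z : ℂ × ℂ} (hf : AnalyticAt ℂ f z) (v w : ℂ × ℂ) :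
    pd v (pd w f) =ᶠ[𝓝 z] pd w (pd v f) := by
  filter_upwards [hf.eventually_analyticAt] with y hy
  rw [pd_pd_apply hy, pd_pd_apply hy]
  exact hy.contDiffAt.isSymmSndFDerivAt_of_omega v w

theorem pd_pd_add {f g : ℂ × ℂ → ℂ} {z : ℂ × ℂ} (hf : AnalyticAt ℂ f z) (hg : AnalyticAt ℂ g z)
    (v w : ℂ × ℂ) : pd v (pd w (f + g)) z = pd v (pd w f) z + pd v (pd w g) z :=
  ((pd_congr (pd_add hf hg w) v).trans
    (pd_add (pd_analyticAt hf w) (pd_analyticAt hg w) v)).eq_of_nhds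

/-! ### Unique continuation for `dY = O(Y)` -/

/-- Finitely many analytic functions that vanish at `z₀`, and whose partial derivatives are
dominated near `z₀` by the functions themselves, vanish near `z₀`: apply Grönwall's inequality on
each segment issuing from `z₀`. -/
theorem eventually_zero_of_isBigO_pd {n : ℕ} {z₀ : ℂ × ℂ} (Y : Fin n → ℂ × ℂ → ℂ)
    (hY : ∀ i, AnalyticAt ℂ (Y i) z₀) (h0 : ∀ i, Y i z₀ = 0)
    (hx : ∀ i, pd (1, 0) (Y i) =O[𝓝 z₀] fun z j => Y j z)
    (hu : ∀ i, pd (0, 1) (Y i) =O[𝓝 z₀] fun z j => Y j z) :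
    ∀ᶠ z in 𝓝 z₀, ∀ i, Y i z = 0 := by
  set F : ℂ × ℂ → Fin n → ℂ := fun z j => Y j z with hF
  have hdF : ∀ᶠ z in 𝓝 z₀, ∀ i, DifferentiableAt ℂ (Y i) z :=
    eventually_all.2 fun i => (hY i).eventually_analyticAt.mono fun z hz => hz.differentiableAt
  have key : ∀ v : ℂ × ℂ, (∀ i, pd v (Y i) =O[𝓝 z₀] F) →
      (fun z => fderiv ℂ F z v) =O[𝓝 z₀] F := by
    intro v hv
    rw [isBigO_pi]
    intro i
    refine (hv i).congr' (hdF.mono fun z hz => ?_) EventuallyEq.rfl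
    simp only [hF, pd]
    rw [fderiv_pi hz]
    rfl
  obtain ⟨C₁, h₁⟩ := (key _ hx).bound
  obtain ⟨C₂, h₂⟩ := (key _ hu).bound
  obtain ⟨r, hr, hball⟩ := Metric.eventually_nhds_iff_ball.1 (hdF.and (h₁.and h₂))
  filter_upwards [Metric.ball_mem_nhds z₀ hr] with z hz
  let p : ℝ → ℂ × ℂ := fun t => z₀ + t • (z - z₀)
  have hp : ∀ t ∈ Set.Icc (0 : ℝ) 1, p t ∈ Metric.ball z₀ r := by
    intro t ht
    have : p t - z₀ = t • (z - z₀) := by simp [p]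
    rw [mem_ball_iff_norm] at hz ⊢
    rw [this, norm_smul, Real.norm_of_nonneg ht.1]
    nlinarith [norm_nonneg (z - z₀), ht.2]
  have hderiv : ∀ t ∈ Set.Icc (0 : ℝ) 1,
      HasDerivAt (fun t => F (p t)) (fderiv ℂ F (p t) (z - z₀)) t := by
    intro t ht
    have hpd : HasDerivAt p (z - z₀) t := by
      simpa [p] using ((hasDerivAt_id t).smul_const (z - z₀)).const_add z₀
    have hFd : DifferentiableAt ℂ F (p t) := differentiableAt_pi.2 (hball _ (hp t ht)).1
    exact (hFd.hasFDerivAt.restrictScalars ℝ).comp_hasDerivAt t hpd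
  have hzero := eq_zero_of_abs_deriv_le_mul_abs_self_of_eq_zero_right
    (f := fun t => F (p t)) (f' := fun t => fderiv ℂ F (p t) (z - z₀))
    (K := ‖(z - z₀).1‖ * C₁ + ‖(z - z₀).2‖ * C₂) (a := 0) (b := 1)
    (fun t ht => (hderiv t ht).continuousAt.continuousWithinAt)
    (fun t ht => (hderiv t (Set.Ico_subset_Icc_self ht)).hasDerivWithinAt)
    (by ext i; simp [p, hF, h0])
    (by
      intro t ht
      obtain ⟨-, hb₁, hb₂⟩ := hball _ (hp t (Set.Ico_subset_Icc_self ht))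
      have hsplit : z - z₀ = (z - z₀).1 • ((1, 0) : ℂ × ℂ) + (z - z₀).2 • ((0, 1) : ℂ × ℂ) := by
        ext <;> simp
      have hval : fderiv ℂ F (p t) (z - z₀) = (z - z₀).1 • fderiv ℂ F (p t) (1, 0)
          + (z - z₀).2 • fderiv ℂ F (p t) (0, 1) := by
        conv_lhs => rw [hsplit]
        rw [map_add, map_smul, map_smul]
      rw [hval]
      refine (norm_add_le _ _).trans ?_
      rw [norm_smul, norm_smul, add_mul, mul_assoc, mul_assoc]
      gcongr)
    1 (by simp)
  intro i
  simpa [p, hF] using congrFun hzero i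

/-! ### Prolongation of the system -/

section Prolongation

variable {z₀ : ℂ × ℂ} {E : Type*} [NormedAddCommGroup E] {Y : ℂ × ℂ → E}

theorem isBigO_coeff_mul {a f : ℂ × ℂ → ℂ} (ha : AnalyticAt ℂ a z₀) (hf : f =O[𝓝 z₀] Y) :
    (a * f) =O[𝓝 z₀] Y := by
  have h := (ha.continuousAt.isBigO_one ℝ).mul hf.norm_right
  simp only [one_mul] at h
  exact h.of_norm_right

theorem isBigO_pd_coeff_mul {a f : ℂ × ℂ → ℂ} (ha : AnalyticAt ℂ a z₀) (hfa : AnalyticAt ℂ f z₀)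
    (hf : f =O[𝓝 z₀] Y) {v : ℂ × ℂ} (hv : pd v f =O[𝓝 z₀] Y) :
    pd v (a * f) =O[𝓝 z₀] Y :=
  ((isBigO_coeff_mul ha hv).add (isBigO_coeff_mul (pd_analyticAt ha v) hf)).congr'
    (pd_mul ha hfa v).symm EventuallyEq.rfl

/-- The first-order jet `(θ, η, θ_x, θ_u, η_x, η_u)`, in the order of the coefficients of
`linExpr`. -/
noncomputable def jetOne (θ η : ℂ × ℂ → ℂ) : Fin 6 → ℂ × ℂ → ℂ :=
  ![θ, η, pdx θ, pdu θ, pdx η, pdu η]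

/-- The eight functions `(θ, η, θ_x, θ_u, η_x, η_u, η_{xu}, θ_{xu})` in terms of which the system
closes up. -/
noncomputable def jetClosed (θ η : ℂ × ℂ → ℂ) : Fin 8 → ℂ × ℂ → ℂ :=
  ![θ, η, pdx θ, pdu θ, pdx η, pdu η, pdu (pdx η), pdu (pdx θ)]

theorem linExpr_eq_sum (c : Fin 6 → ℂ × ℂ → ℂ) (θ η : ℂ × ℂ → ℂ) :
    linExpr c θ η = ∑ ν, c ν * jetOne θ η ν := by
  ext z
  simp [linExpr, jetOne, Fin.sum_univ_six]

theorem jetOne_analyticAt {θ η : ℂ × ℂ → ℂ} (hθ : AnalyticAt ℂ θ z₀) (hη : AnalyticAt ℂ η z₀)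
    (ν : Fin 6) : AnalyticAt ℂ (jetOne θ η ν) z₀ := by
  fin_cases ν
  exacts [hθ, hη, pd_analyticAt hθ _, pd_analyticAt hθ _, pd_analyticAt hη _, pd_analyticAt hη _]

theorem jetClosed_analyticAt {θ η : ℂ × ℂ → ℂ} (hθ : AnalyticAt ℂ θ z₀) (hη : AnalyticAt ℂ η z₀)
    (i : Fin 8) : AnalyticAt ℂ (jetClosed θ η i) z₀ := by
  fin_cases i
  exacts [hθ, hη, pd_analyticAt hθ _, pd_analyticAt hθ _, pd_analyticAt hη _, pd_analyticAt hη _,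
    pd_analyticAt (pd_analyticAt hη _) _, pd_analyticAt (pd_analyticAt hθ _) _]

theorem isBigO_linExpr {c : Fin 6 → ℂ × ℂ → ℂ} (hc : ∀ ν, AnalyticAt ℂ (c ν) z₀)
    {θ η : ℂ × ℂ → ℂ} (hJ : ∀ ν, jetOne θ η ν =O[𝓝 z₀] Y) :
    linExpr c θ η =O[𝓝 z₀] Y := by
  rw [linExpr_eq_sum]
  exact IsBigO.sum fun ν _ => isBigO_coeff_mul (hc ν) (hJ ν)

theorem isBigO_pd_linExpr {c : Fin 6 → ℂ × ℂ → ℂ} (hc : ∀ ν, AnalyticAt ℂ (c ν) z₀)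
    {θ η : ℂ × ℂ → ℂ} (hθ : AnalyticAt ℂ θ z₀) (hη : AnalyticAt ℂ η z₀)
    (hJ : ∀ ν, jetOne θ η ν =O[𝓝 z₀] Y) {v : ℂ × ℂ}
    (hv : ∀ ν, pd v (jetOne θ η ν) =O[𝓝 z₀] Y) :
    pd v (linExpr c θ η) =O[𝓝 z₀] Y := by
  have hana : ∀ ν, AnalyticAt ℂ (c ν * jetOne θ η ν) z₀ := fun ν =>
    (hc ν).mul (jetOne_analyticAt hθ hη ν)
  have hsum : (fun z => ∑ ν, pd v (c ν * jetOne θ η ν) z) =O[𝓝 z₀] Y := by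
    rw [← Finset.sum_fn]
    exact IsBigO.sum fun ν _ =>
      isBigO_pd_coeff_mul (hc ν) (jetOne_analyticAt hθ hη ν) (hJ ν) (hv ν)
  refine hsum.congr' ?_ EventuallyEq.rfl
  filter_upwards [eventually_all.2 fun ν => (hana ν).eventually_analyticAt] with z hz
  rw [linExpr_eq_sum]
  simp only [pd]
  rw [fderiv_sum fun ν _ => (hz ν).differentiableAt, sum_apply]

/-- The prolonged system is closed: both partial derivatives of the eight functions `jetClosed θ η`
are dominated by these functions. -/
theorem isBigO_pd_jetClosed {c : Fin 4 → Fin 6 → ℂ × ℂ → ℂ}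
    (hc : ∀ t ν, AnalyticAt ℂ (c t ν) z₀)
    {θ η : ℂ × ℂ → ℂ} (hθ : AnalyticAt ℂ θ z₀) (hη : AnalyticAt ℂ η z₀)
    (e₁ : ∀ᶠ z in 𝓝 z₀, pdx (pdx η) z = linExpr (c 0) θ η z)
    (e₂ : ∀ᶠ z in 𝓝 z₀, 2 * pdu (pdx η) z - pdx (pdx θ) z = linExpr (c 1) θ η z)
    (e₃ : ∀ᶠ z in 𝓝 z₀, pdu (pdu η) z - 2 * pdu (pdx θ) z = linExpr (c 2) θ η z)
    (e₄ : ∀ᶠ z in 𝓝 z₀, pdu (pdu θ) z = linExpr (c 3) θ η z) :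
    (∀ i, pd (1, 0) (jetClosed θ η i) =O[𝓝 z₀] fun z j => jetClosed θ η j z) ∧
      (∀ i, pd (0, 1) (jetClosed θ η i) =O[𝓝 z₀] fun z j => jetClosed θ η j z) := by
  set W : ℂ × ℂ → Fin 8 → ℂ := fun z j => jetClosed θ η j z with hW
  have hY : ∀ i, jetClosed θ η i =O[𝓝 z₀] W := fun i =>
    IsBigO.of_bound 1 (Eventually.of_forall fun z => by
      simpa using norm_le_pi_norm (W z) i)
  have hpx : pdx = pd (1, 0) := rfl
  have hpu : pdu = pd (0, 1) := rfl
  have hJ : ∀ ν, jetOne θ η ν =O[𝓝 z₀] W := by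
    intro ν
    fin_cases ν
    exacts [hY 0, hY 1, hY 2, hY 3, hY 4, hY 5]
  have hηxu : pdu (pdx η) =O[𝓝 z₀] W := hY 6
  have hθxu : pdu (pdx θ) =O[𝓝 z₀] W := hY 7
  have hL : ∀ t, linExpr (c t) θ η =O[𝓝 z₀] W := fun t => isBigO_linExpr (hc t) hJ
  have hηxx : pdx (pdx η) =O[𝓝 z₀] W := (hL 0).congr' (e₁.mono fun _ h => h.symm) .rfl
  have hθuu : pdu (pdu θ) =O[𝓝 z₀] W := (hL 3).congr' (e₄.mono fun _ h => h.symm) .rfl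
  have hθxx : pdx (pdx θ) =O[𝓝 z₀] W :=
    ((hηxu.const_mul_left 2).sub (hL 1)).congr' (e₂.mono fun _ h => by beta_reduce; rw [← h]; ring) .rfl
  have hηuu : pdu (pdu η) =O[𝓝 z₀] W :=
    ((hθxu.const_mul_left 2).add (hL 2)).congr' (e₃.mono fun _ h => by beta_reduce; rw [← h]; ring) .rfl
  have hηux : pdx (pdu η) =O[𝓝 z₀] W := hηxu.congr' (pd_comm hη _ _) .rfl
  have hθux : pdx (pdu θ) =O[𝓝 z₀] W := hθxu.congr' (pd_comm hθ _ _) .rfl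
  have hJx : ∀ ν, pd (1, 0) (jetOne θ η ν) =O[𝓝 z₀] W := by
    intro ν
    fin_cases ν
    exacts [hY 2, hY 4, hθxx, hθux, hηxx, hηux]
  have hJu : ∀ ν, pd (0, 1) (jetOne θ η ν) =O[𝓝 z₀] W := by
    intro ν
    fin_cases ν
    exacts [hY 3, hY 5, hθxu, hθuu, hηxu, hηuu]
  have hLx : ∀ t, pdx (linExpr (c t) θ η) =O[𝓝 z₀] W := fun t =>
    isBigO_pd_linExpr (hc t) hθ hη hJ hJx
  have hLu : ∀ t, pdu (linExpr (c t) θ η) =O[𝓝 z₀] W := fun t =>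
    isBigO_pd_linExpr (hc t) hθ hη hJ hJu
  -- `η_{xux} = ∂_u η_{xx}`
  have hAx : pdx (pdu (pdx η)) =O[𝓝 z₀] W :=
    (hLu 0).congr' ((pd_comm (pd_analyticAt hη _) _ _).trans (pd_congr e₁ _)).symm .rfl
  -- `θ_{xuu} = ∂_x θ_{uu}`
  have hBu : pdu (pdu (pdx θ)) =O[𝓝 z₀] W :=
    (hLx 3).congr' ((pd_congr (pd_comm hθ _ _) _).trans
      ((pd_comm (pd_analyticAt hθ _) _ _).trans (pd_congr e₄ _))).symm .rfl
  have hηxu' := pd_analyticAt (pd_analyticAt hη (1, 0)) (0, 1)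
  have hθxx' := pd_analyticAt (pd_analyticAt hθ (1, 0)) (1, 0)
  have hηuu' := pd_analyticAt (pd_analyticAt hη (0, 1)) (0, 1)
  have hθxu' := pd_analyticAt (pd_analyticAt hθ (1, 0)) (0, 1)
  -- the second equation differentiated in `u`
  have f₂ : ∀ᶠ z in 𝓝 z₀, 2 * pdu (pdu (pdx η)) z - pdx (pdu (pdx θ)) z
      = pdu (linExpr (c 1) θ η) z := by
    have h : (2 : ℂ) • pdu (pdx η) - pdx (pdx θ) =ᶠ[𝓝 z₀] linExpr (c 1) θ η := e₂
    filter_upwards [pd_congr h (0, 1), pd_sub (hηxu'.const_smul (c := (2 : ℂ))) hθxx' (0, 1),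
      pd_comm (pd_analyticAt hθ (1, 0)) (1, 0) (0, 1)] with z h₁ h₂ h₃
    simp only [hpx, hpu] at *
    rw [← h₁, h₂, h₃, pd_smul]
    rfl
  -- the third equation differentiated in `x`
  have f₃ : ∀ᶠ z in 𝓝 z₀, pdu (pdu (pdx η)) z - 2 * pdx (pdu (pdx θ)) z
      = pdx (linExpr (c 2) θ η) z := by
    have h : pdu (pdu η) - (2 : ℂ) • pdu (pdx θ) =ᶠ[𝓝 z₀] linExpr (c 2) θ η := e₃
    filter_upwards [pd_congr h (1, 0), pd_sub hηuu' (hθxu'.const_smul (c := (2 : ℂ))) (1, 0),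
      (pd_congr (pd_comm hη (0, 1) (1, 0)) (0, 1)).trans
        (pd_comm (pd_analyticAt hη (0, 1)) (0, 1) (1, 0))] with z h₁ h₂ h₃
    simp only [hpx, hpu] at *
    rw [← h₁, h₂, h₃, pd_smul]
    rfl
  -- Cramer's rule for the system `f₂`, `f₃`, of determinant `-3`
  have hBx : pdx (pdu (pdx θ)) =O[𝓝 z₀] W :=
    (((hLu 1).sub ((hLx 2).const_mul_left 2)).const_mul_left (1 / 3)).congr'
      ((f₂.and f₃).mono fun _ h => by beta_reduce; rw [← h.1, ← h.2]; ring) .rfl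
  have hAu : pdu (pdu (pdx η)) =O[𝓝 z₀] W :=
    ((((hLu 1).const_mul_left 2).sub (hLx 2)).const_mul_left (1 / 3)).congr'
      ((f₂.and f₃).mono fun _ h => by beta_reduce; rw [← h.1, ← h.2]; ring) .rfl
  refine ⟨fun i => ?_, fun i => ?_⟩ <;> fin_cases i
  exacts [hY 2, hY 4, hθxx, hθux, hηxx, hηux, hAx, hBx,
    hY 3, hY 5, hθxu, hθuu, hηxu, hηuu, hAu, hBu]

end Prolongation

/-! ### The solution space -/

/-- The space of solutions: pairs of functions on `ℂ²`, unconstrained outside `U`, that are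
analytic and satisfy the four equations on `U`. -/
def solutionSpace (U : Set (ℂ × ℂ)) (c : Fin 4 → Fin 6 → (ℂ × ℂ → ℂ)) :
    Submodule ℂ ((ℂ × ℂ → ℂ) × (ℂ × ℂ → ℂ)) where
  carrier := {p : (ℂ × ℂ → ℂ) × (ℂ × ℂ → ℂ) |
    AnalyticOnNhd ℂ p.1 U ∧ AnalyticOnNhd ℂ p.2 U ∧
    (∀ z ∈ U, pdx (pdx p.2) z = linExpr (c 0) p.1 p.2 z) ∧
    (∀ z ∈ U, 2 * pdu (pdx p.2) z - pdx (pdx p.1) z = linExpr (c 1) p.1 p.2 z) ∧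
    (∀ z ∈ U, pdu (pdu p.2) z - 2 * pdu (pdx p.1) z = linExpr (c 2) p.1 p.2 z) ∧
    (∀ z ∈ U, pdu (pdu p.1) z = linExpr (c 3) p.1 p.2 z)}
  add_mem' := by
    rintro ⟨θ, η⟩ ⟨θ', η'⟩ ⟨hθ, hη, h₁, h₂, h₃, h₄⟩ ⟨hθ', hη', h₁', h₂', h₃', h₄'⟩
    have hpx : pdx = pd (1, 0) := rfl
    have hpu : pdu = pd (0, 1) := rfl
    have hL : ∀ t, ∀ z ∈ U, linExpr (c t) (θ + θ') (η + η') z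
        = linExpr (c t) θ η z + linExpr (c t) θ' η' z := by
      intro t z hz
      simp only [linExpr, hpx, hpu, (pd_add (hθ z hz) (hθ' z hz) _).eq_of_nhds,
        (pd_add (hη z hz) (hη' z hz) _).eq_of_nhds, Pi.add_apply]
      ring
    simp only [hpx, hpu] at h₁ h₂ h₃ h₄ h₁' h₂' h₃' h₄'
    refine ⟨hθ.add hθ', hη.add hη', fun z hz => ?_, fun z hz => ?_, fun z hz => ?_,
      fun z hz => ?_⟩ <;>
    simp only [Prod.mk_add_mk, hL _ z hz, hpx, hpu, pd_pd_add (hθ z hz) (hθ' z hz),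
      pd_pd_add (hη z hz) (hη' z hz)]
    · linear_combination h₁ z hz + h₁' z hz
    · linear_combination h₂ z hz + h₂' z hz
    · linear_combination h₃ z hz + h₃' z hz
    · linear_combination h₄ z hz + h₄' z hz
  zero_mem' := by
    have hpd : ∀ v, pd v 0 = 0 := fun v => by simpa using pd_smul 0 0 v
    have hpx : pdx = pd (1, 0) := rfl
    have hpu : pdu = pd (0, 1) := rfl
    refine ⟨analyticOnNhd_const, analyticOnNhd_const, ?_, ?_, ?_, ?_⟩ <;>
    simp [linExpr, hpx, hpu, hpd]
  smul_mem' := by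
    rintro a ⟨θ, η⟩ ⟨hθ, hη, h₁, h₂, h₃, h₄⟩
    have hpx : pdx = pd (1, 0) := rfl
    have hpu : pdu = pd (0, 1) := rfl
    have hL : ∀ t z, linExpr (c t) (a • θ) (a • η) z = a * linExpr (c t) θ η z := by
      intro t z
      simp only [linExpr, hpx, hpu, pd_smul, Pi.smul_apply, smul_eq_mul]
      ring
    simp only [hpx, hpu] at h₁ h₂ h₃ h₄
    refine ⟨hθ.const_smul, hη.const_smul, fun z hz => ?_, fun z hz => ?_, fun z hz => ?_,
      fun z hz => ?_⟩ <;>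
    simp only [Prod.smul_mk, hL, hpx, hpu, pd_smul, Pi.smul_apply, smul_eq_mul]
    · linear_combination a * h₁ z hz
    · linear_combination a * h₂ z hz
    · linear_combination a * h₃ z hz
    · linear_combination a * h₄ z hz

theorem jetClosed_add {θ η θ' η' : ℂ × ℂ → ℂ} {z : ℂ × ℂ} (hθ : AnalyticAt ℂ θ z)
    (hη : AnalyticAt ℂ η z) (hθ' : AnalyticAt ℂ θ' z) (hη' : AnalyticAt ℂ η' z) (i : Fin 8) :
    jetClosed (θ + θ') (η + η') i z = jetClosed θ η i z + jetClosed θ' η' i z := by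
  fin_cases i
  exacts [rfl, rfl, (pd_add hθ hθ' _).eq_of_nhds, (pd_add hθ hθ' _).eq_of_nhds,
    (pd_add hη hη' _).eq_of_nhds, (pd_add hη hη' _).eq_of_nhds, pd_pd_add hη hη' _ _,
    pd_pd_add hθ hθ' _ _]

theorem jetClosed_smul (a : ℂ) (θ η : ℂ × ℂ → ℂ) (z : ℂ × ℂ) (i : Fin 8) :
    jetClosed (a • θ) (a • η) i z = a * jetClosed θ η i z := by
  have hpx : pdx = pd (1, 0) := rfl
  have hpu : pdu = pd (0, 1) := rfl
  fin_cases i <;> simp [jetClosed, hpx, hpu, pd_smul]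

/-- Evaluation at `z₀ ∈ U` of the eight functions `jetClosed`, on solutions. -/
noncomputable def evalJet (U : Set (ℂ × ℂ)) (c : Fin 4 → Fin 6 → (ℂ × ℂ → ℂ)) (z₀ : ℂ × ℂ)
    (hz₀ : z₀ ∈ U) : solutionSpace U c →ₗ[ℂ] (Fin 8 → ℂ) where
  toFun p i := jetClosed p.1.1 p.1.2 i z₀
  map_add' p q := by
    ext i
    exact jetClosed_add (p.2.1 z₀ hz₀) (p.2.2.1 z₀ hz₀) (q.2.1 z₀ hz₀) (q.2.2.1 z₀ hz₀) i
  map_smul' a p := by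
    ext i
    exact jetClosed_smul a _ _ z₀ i

/-- Restriction of solutions to `U`. -/
def restrictSol (U : Set (ℂ × ℂ)) (c : Fin 4 → Fin 6 → (ℂ × ℂ → ℂ)) :
    solutionSpace U c →ₗ[ℂ] (U → ℂ) × (U → ℂ) where
  toFun p := (U.restrict p.1.1, U.restrict p.1.2)
  map_add' _ _ := rfl
  map_smul' _ _ := rfl

theorem ker_evalJet_le {U : Set (ℂ × ℂ)} (hUopen : IsOpen U) (hUconn : IsConnected U)
    {c : Fin 4 → Fin 6 → (ℂ × ℂ → ℂ)} (hc : ∀ t ν, AnalyticOnNhd ℂ (c t ν) U)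
    {z₀ : ℂ × ℂ} (hz₀ : z₀ ∈ U) :
    LinearMap.ker (evalJet U c z₀ hz₀) ≤ LinearMap.ker (restrictSol U c) := by
  rintro ⟨⟨θ, η⟩, hθ, hη, h₁, h₂, h₃, h₄⟩ hker
  have h0 : ∀ i, jetClosed θ η i z₀ = 0 := fun i => congrFun (LinearMap.mem_ker.1 hker) i
  have hU : ∀ {P : ℂ × ℂ → Prop}, (∀ z ∈ U, P z) → ∀ᶠ z in 𝓝 z₀, P z := fun h =>
    (hUopen.eventually_mem hz₀).mono h
  obtain ⟨hx, hu⟩ := isBigO_pd_jetClosed (fun t ν => hc t ν z₀ hz₀) (hθ z₀ hz₀) (hη z₀ hz₀)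
    (hU h₁) (hU h₂) (hU h₃) (hU h₄)
  have hloc := eventually_zero_of_isBigO_pd (jetClosed θ η)
    (jetClosed_analyticAt (hθ z₀ hz₀) (hη z₀ hz₀)) h0 hx hu
  have hθ0 := hθ.eqOn_zero_of_preconnected_of_eventuallyEq_zero hUconn.isPreconnected hz₀
    (hloc.mono fun z h => h 0)
  have hη0 := hη.eqOn_zero_of_preconnected_of_eventuallyEq_zero hUconn.isPreconnected hz₀
    (hloc.mono fun z h => h 1)
  refine LinearMap.mem_ker.2 (Prod.ext ?_ ?_)
  · exact funext fun z => hθ0 z.2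
  · exact funext fun z => hη0 z.2


/-- Let `U ⊆ ℂ²` be a connected open set with coordinates `(x,u)`, and for
`t = 1,2,3,4` let `L_t(θ,η)` be first-order linear expressions in `(θ,η)` with analytic
coefficients on `U`.  Then the `ℂ`-vector space of pairs `(θ,η)` of analytic functions
on `U` satisfying the system `η_{xx} = L₁(θ,η)`, `2η_{xu} − θ_{xx} = L₂(θ,η)`,
`η_{uu} − 2θ_{xu} = L₃(θ,η)`, `θ_{uu} = L₄(θ,η)` on `U` has dimension at most `8`.
(This covers the Lie equations of any holomorphic second order ODE `u_{xx} = F(x,u,u_x)`,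
whose symmetry algebra therefore has dimension at most `8`.) -/
theorem perturbed_flat_ODE_symmetry_dim_le_eight
    (U : Set (ℂ × ℂ)) (hUopen : IsOpen U) (hUconn : IsConnected U)
    (c : Fin 4 → Fin 6 → (ℂ × ℂ → ℂ))
    (hc : ∀ t ν, AnalyticOnNhd ℂ (c t ν) U) :
    Module.rank ℂ
      ↥(Submodule.span ℂ
        ((fun p : (ℂ × ℂ → ℂ) × (ℂ × ℂ → ℂ) => (U.restrict p.1, U.restrict p.2)) ''
          {p : (ℂ × ℂ → ℂ) × (ℂ × ℂ → ℂ) |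
            AnalyticOnNhd ℂ p.1 U ∧ AnalyticOnNhd ℂ p.2 U ∧
            (∀ z ∈ U, pdx (pdx p.2) z = linExpr (c 0) p.1 p.2 z) ∧
            (∀ z ∈ U, 2 * pdu (pdx p.2) z - pdx (pdx p.1) z = linExpr (c 1) p.1 p.2 z) ∧
            (∀ z ∈ U, pdu (pdu p.2) z - 2 * pdu (pdx p.1) z = linExpr (c 2) p.1 p.2 z) ∧
            (∀ z ∈ U, pdu (pdu p.1) z = linExpr (c 3) p.1 p.2 z)}))
      ≤ 8 := by
  obtain ⟨z₀, hz₀⟩ := hUconn.nonempty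
  have hker := ker_evalJet_le hUopen hUconn hc hz₀
  -- restriction to `U` factors through the image of the jet map in `ℂ⁸`
  let g : LinearMap.range (evalJet U c z₀ hz₀) →ₗ[ℂ] (U → ℂ) × (U → ℂ) :=
    ((LinearMap.ker (evalJet U c z₀ hz₀)).liftQ (restrictSol U c) hker).comp
      (evalJet U c z₀ hz₀).quotKerEquivRange.symm.toLinearMap
  have hspan : Submodule.span ℂ
      ((fun p : (ℂ × ℂ → ℂ) × (ℂ × ℂ → ℂ) => (U.restrict p.1, U.restrict p.2)) ''
        (solutionSpace U c : Set ((ℂ × ℂ → ℂ) × (ℂ × ℂ → ℂ)))) ≤ LinearMap.range g := by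
    rw [Submodule.span_le]
    rintro _ ⟨p, hp, rfl⟩
    refine ⟨(evalJet U c z₀ hz₀).quotKerEquivRange (Submodule.Quotient.mk ⟨p, hp⟩), ?_⟩
    simp only [g, LinearMap.comp_apply, LinearEquiv.coe_coe, LinearEquiv.symm_apply_apply,
      Submodule.liftQ_apply]
    rfl
  calc _ ≤ Module.rank ℂ (LinearMap.range g) := Submodule.rank_mono hspan
    _ ≤ Module.rank ℂ (LinearMap.range (evalJet U c z₀ hz₀)) := rank_range_le g
    _ ≤ Module.rank ℂ (Fin 8 → ℂ) := Submodule.rank_le _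
    _ = 8 := by simp
end
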